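/- If G satisfies conditions (G) with q > 1, then G_p ∈ B_q; more precisely ‖G_p‖ ≤ C_{d,p,q} where C_{d,p,q} = 2(p+1)^{(q+1)/d} sup_{k∈ℝ}(1+|k|^q)(1+|k|) Σ_{j=0}^{2} |∂_ω^j Ĝ(k,1)|. -/

import Mathlib

open MeasureTheory Filter Topology

noncomputable section

/-- Fourier transform, convention `f̂ ω = ∫ e^{-iωx} f x dx`. -/
def FT (f : ℝ → ℂ) (ω : ℝ) : ℂ :=
  ∫ x : ℝ, Complex.exp (-(Complex.I * ω * x)) * f x

/-- Fourier transform of a real-valued function. -/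
def FTr (f : ℝ → ℝ) : ℝ → ℂ := FT fun x => (f x : ℂ)

/-- The quantity whose supremum over `ω` defines the `B_q` norm. -/
def bqFun (q : ℝ) (f : ℝ → ℂ) (ω : ℝ) : ℝ :=
  (1 + |ω| ^ q) * (‖FT f ω‖ + ‖deriv (FT f) ω‖ + ‖deriv (deriv (FT f)) ω‖)

/-- The `B_q` norm `‖f‖ = sup_ω (1+|ω|^q)(|f̂(ω)|+|f̂′(ω)|+|f̂″(ω)|)`. -/
def bqNorm (q : ℝ) (f : ℝ → ℂ) : ℝ := ⨆ ω : ℝ, bqFun q f ω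

/-- The `B_q` norm of a real-valued function. -/
def bqNormR (q : ℝ) (f : ℝ → ℝ) : ℝ := bqNorm q fun x => (f x : ℂ)

/-- Membership in the space `B_q`: `f ∈ L¹`, `f̂ ∈ C²`, finite `B_q` norm. -/
def MemBq (q : ℝ) (f : ℝ → ℂ) : Prop :=
  Integrable f ∧ ContDiff ℝ 2 (FT f) ∧ BddAbove (Set.range (bqFun q f))

/-- Membership in `B_q` for a real-valued function. -/
def MemBqR (q : ℝ) (f : ℝ → ℝ) : Prop := MemBq q fun x => (f x : ℂ)

/-- Condition (G1): there is an integer `M > 0` such that `G(·,1) ∈ C^{q+2}` with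
polynomial decay of all derivatives up to order `q+2`. -/
def CondG1 (G : ℝ → ℝ → ℝ) (q : ℕ) : Prop :=
  ∃ M : ℕ, 0 < M ∧ ContDiff ℝ (q + 2 : ℕ) (fun x => G x 1) ∧
    ∀ j ≤ q + 2, ∃ B : ℝ, ∀ x : ℝ,
      (1 + |x| + x ^ 2) * (1 + |x|) ^ (M + 1) *
        |iteratedDeriv j (fun y => G y 1) x| ≤ B

/-- Condition (G2): scaling `G(x,t) = t^{-1/d} G(t^{-1/d}x, 1)`. -/
def CondG2 (G : ℝ → ℝ → ℝ) (d : ℝ) : Prop :=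
  ∀ x t : ℝ, 0 < t →
    G x t = t ^ (-(1 : ℝ) / d) * G (t ^ (-(1 : ℝ) / d) * x) 1

/-- Condition (G3): the semigroup (convolution) property. -/
def CondG3 (G : ℝ → ℝ → ℝ) : Prop :=
  ∀ x t τ : ℝ, 0 < τ → τ < t → G x t = ∫ y : ℝ, G (x - y) (t - τ) * G y τ

/-- Conditions (G). -/
def CondsG (G : ℝ → ℝ → ℝ) (q : ℕ) (d : ℝ) : Prop :=
  CondG1 G q ∧ CondG2 G d ∧ CondG3 G

/-- Hypotheses on the coefficient `c`: positive, locally integrable on `(1,∞)`,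
and `c(t) = t^p + o(t^p)` as `t → ∞`. -/
def CondC (c : ℝ → ℝ) (p : ℝ) : Prop :=
  0 < p ∧ (∀ t : ℝ, 1 < t → 0 < c t) ∧
    LocallyIntegrableOn c (Set.Ioi 1) ∧
    (fun t => c t - t ^ p) =o[atTop] fun t => t ^ p

/-- `s(t) = ∫₁ᵗ c(τ) dτ`. -/
def sF (c : ℝ → ℝ) (t : ℝ) : ℝ := ∫ τ in (1:ℝ)..t, c τ

/-- `r(t) = s(t) − (t^{p+1}−1)/(p+1)`. -/
def rF (c : ℝ → ℝ) (p t : ℝ) : ℝ := sF c t - (t ^ (p + 1) - 1) / (p + 1)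

/-- Hypothesis on `L₀`: `L₀ > 1` and `|r(L)|/L^{p+1} < 1/(4(p+1))` for `L > L₀`. -/
def CondL0 (c : ℝ → ℝ) (p L₀ : ℝ) : Prop :=
  1 < L₀ ∧ ∀ L : ℝ, L₀ < L → |rF c p L| / L ^ (p + 1) < 1 / (4 * (p + 1))

/-- `L₁ = max {L₀, 3^{1/(p+1)}}`. -/
def Lone (p L₀ : ℝ) : ℝ := max L₀ ((3:ℝ) ^ ((1:ℝ) / (p + 1)))

/-- `s_n(t) = (s(Lⁿt) − s(Lⁿ))/L^{n(p+1)}`. -/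
def sn (c : ℝ → ℝ) (p L : ℝ) (n : ℕ) (t : ℝ) : ℝ :=
  (sF c (L ^ n * t) - sF c (L ^ n)) / L ^ ((n : ℝ) * (p + 1))

/-- `u_f(x,t) = ∫ G(x−y, s_n(t)) f(y) dy`. -/
def linSol (G : ℝ → ℝ → ℝ) (c : ℝ → ℝ) (p L : ℝ) (n : ℕ) (f : ℝ → ℝ)
    (x t : ℝ) : ℝ :=
  ∫ y : ℝ, G (x - y) (sn c p L n t) * f y

/-- The linear RG operator `(R⁰_{L,n}f)(x) = L^{2(p+1)/d} u_f(L^{(p+1)/d}x, L)`. -/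
def RG0 (G : ℝ → ℝ → ℝ) (c : ℝ → ℝ) (p d L : ℝ) (n : ℕ) (f : ℝ → ℝ) :
    ℝ → ℝ := fun x =>
  L ^ (2 * (p + 1) / d) * linSol G c p L n f (L ^ ((p + 1) / d) * x) L

/-- `R⁰_{Lⁿ} = R⁰_{L,n−1} ∘ ⋯ ∘ R⁰_{L,0}`. -/
def RG0iter (G : ℝ → ℝ → ℝ) (c : ℝ → ℝ) (p d L : ℝ) :
    ℕ → (ℝ → ℝ) → ℝ → ℝ
  | 0 => fun f => f
  | n + 1 => fun f => RG0 G c p d L n (RG0iter G c p d L n f)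

/-- `G_p(x) = ∂ₓ G(x, 1/(p+1))`. -/
def Gp (G : ℝ → ℝ → ℝ) (p : ℝ) : ℝ → ℝ :=
  fun x => deriv (fun y => G y (1 / (p + 1))) x

/-- The nonlinearity `F(u,u_x)(y,τ) = Σ_j a_j u(y,τ)^j ∂ₓu(y,τ)`. -/
def Fnl (a : ℕ → ℝ) (u : ℝ → ℝ → ℝ) (y τ : ℝ) : ℝ :=
  ∑' j : ℕ, a j * u y τ ^ j * deriv (fun z => u z τ) y

/-- The coefficients define a series analytic at the origin with positive
radius of convergence. -/
def AnalyticCoeffs (a : ℕ → ℝ) : Prop :=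
  ∃ ρ : ℝ, 0 < ρ ∧ ∀ z : ℝ, |z| < ρ → Summable fun j : ℕ => |a j| * |z| ^ j

/-- `u` solves the nonlinear integral equation for all `t > 1`. -/
def SolvesNL (G : ℝ → ℝ → ℝ) (c : ℝ → ℝ) (lam : ℝ) (a : ℕ → ℝ)
    (f : ℝ → ℝ) (u : ℝ → ℝ → ℝ) : Prop :=
  ∀ x : ℝ, ∀ t : ℝ, 1 < t → u x t =
    (∫ y : ℝ, G (x - y) (sF c t) * f y) +
      lam * ∫ τ in (1:ℝ)..t, ∫ y : ℝ,
        G (x - y) (sF c t - sF c τ) * Fnl a u y τ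

/-- The norm `‖u‖_L = sup_{t∈[1,L]} ‖u(·,t)‖` on `B^{(L)}`. -/
def normL (q L : ℝ) (u : ℝ → ℝ → ℝ) : ℝ :=
  ⨆ t : Set.Icc (1:ℝ) L, bqNormR q fun x => u x (t : ℝ)

/-- `d_F = (2α+3)(p+1) − 2(p+1) − d`. -/
def dF (p d : ℝ) (α : ℕ) : ℝ := (2 * (α : ℝ) + 3) * (p + 1) - 2 * (p + 1) - d

/-- The generalized coupling constant `λ_n = L^{-(n/d)[(2α+3)(p+1)−2(p+1)−d]} λ`. -/
def lamn (lam p d L : ℝ) (α n : ℕ) : ℝ :=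
  L ^ (-((n : ℝ) / d) * dF p d α) * lam

/-- The renormalized nonlinearity `F_{L,n}`. -/
def FnlRen (a : ℕ → ℝ) (p d L : ℝ) (α n : ℕ) (u : ℝ → ℝ → ℝ)
    (y τ : ℝ) : ℝ :=
  ∑' j : ℕ, a j * L ^ (2 * (n : ℝ) / d * (p + 1) * ((α : ℝ) - (j : ℝ))) *
    u y τ ^ j * deriv (fun z => u z τ) y

/-- The rescaled solution `u_n(x,t) = L^{2n(p+1)/d} u(L^{n(p+1)/d}x, Lⁿt)`. -/
def resc (u : ℝ → ℝ → ℝ) (p d L : ℝ) (n : ℕ) (x t : ℝ) : ℝ :=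
  L ^ (2 * (n : ℝ) * (p + 1) / d) *
    u (L ^ ((n : ℝ) * (p + 1) / d) * x) (L ^ n * t)

/-- `u` solves the `n`-th renormalized integral equation on `[1,L]` with data `f`. -/
def SolvesRen (G : ℝ → ℝ → ℝ) (c : ℝ → ℝ) (lam p d L : ℝ) (a : ℕ → ℝ)
    (α n : ℕ) (f : ℝ → ℝ) (u : ℝ → ℝ → ℝ) : Prop :=
  ∀ x : ℝ, ∀ t ∈ Set.Icc (1:ℝ) L, u x t =
    (∫ y : ℝ, G (x - y) (sn c p L n t) * f y) +
      lamn lam p d L α n * ∫ τ in (1:ℝ)..t, ∫ y : ℝ,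
        G (x - y) (sn c p L n t - sn c p L n τ) * FnlRen a p d L α n u y τ

end

theorem FT_eq_fourier (f : ℝ → ℂ) :
    FT f = fun ω => FourierTransform.fourier f ((2 * Real.pi)⁻¹ * ω) := by
  funext ω
  rw [Real.fourier_real_eq_integral_exp_smul]
  unfold FT
  congr 1
  funext x
  rw [smul_eq_mul]
  congr 2
  have : (Real.pi : ℂ) ≠ 0 := by exact_mod_cast Real.pi_ne_zero
  push_cast
  field_simp

theorem FT_contDiff (f : ℝ → ℂ)
    (hf : ∀ n : ℕ, n ≤ 2 → Integrable (fun v : ℝ => ‖v‖ ^ n * ‖f v‖)) :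
    ContDiff ℝ 2 (FT f) := by
  rw [FT_eq_fourier]
  have h : ContDiff ℝ ((2 : ℕ∞) : WithTop ℕ∞) (FourierTransform.fourier f : ℝ → ℂ) :=
    Real.contDiff_fourier (N := 2) (fun n hn => hf n (by exact_mod_cast hn))
  have h2 : ContDiff ℝ 2 (FourierTransform.fourier f : ℝ → ℂ) := h
  exact h2.comp (by fun_prop)

theorem FT_decay (f : ℝ → ℂ) (N : ℕ) (hf : ContDiff ℝ N f)
    (hint : ∀ k n : ℕ, k ≤ 2 → n ≤ N →
      Integrable (fun v : ℝ => ‖v‖ ^ k * ‖iteratedFDeriv ℝ n f v‖))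
    (k n : ℕ) (hk : k ≤ 2) (hn : n ≤ N) :
    ∃ C : ℝ, ∀ w : ℝ, |w| ^ n * ‖iteratedDeriv k (FT f) w‖ ≤ C := by
  have hN : ContDiff ℝ ((N : ℕ∞) : WithTop ℕ∞) f := by exact_mod_cast hf
  have key := fun w => Real.pow_mul_norm_iteratedFDeriv_fourier_le (K := 2) (N := (N : ℕ∞)) hN
    (fun k n hk hn => hint k n (by exact_mod_cast hk) (by exact_mod_cast hn))
    (k := k) (n := n) (by exact_mod_cast hk) (by exact_mod_cast hn) w
  have hcd : ContDiff ℝ 2 (FourierTransform.fourier f : ℝ → ℂ) := by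
    have h : ContDiff ℝ ((2 : ℕ∞) : WithTop ℕ∞) (FourierTransform.fourier f : ℝ → ℂ) :=
      Real.contDiff_fourier (N := 2) (fun n hn => by
        simpa using hint n 0 (by exact_mod_cast hn) (Nat.zero_le _))
    exact h
  have hcdk : ContDiff ℝ k (FourierTransform.fourier f : ℝ → ℂ) :=
    hcd.of_le (by exact_mod_cast hk)
  generalize hCdef : (2 * Real.pi) ^ k * (2 * k + 2) ^ n *
      ∑ p ∈ Finset.range (k + 1) ×ˢ Finset.range (n + 1),
        ∫ (v : ℝ), ‖v‖ ^ p.1 * ‖iteratedFDeriv ℝ p.2 f v‖ = C at key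
  set c : ℝ := (2 * Real.pi)⁻¹ with hc
  have hcpos : 0 < c := by positivity
  refine ⟨c ^ k * (c ^ n)⁻¹ * C, fun w => ?_⟩
  rw [FT_eq_fourier]
  have := iteratedDeriv_comp_const_smul hcdk c
  rw [this]
  have hk := key (c * w)
  rw [norm_iteratedFDeriv_eq_norm_iteratedDeriv] at hk
  rw [norm_smul]
  simp only [norm_mul, norm_pow, Real.norm_eq_abs, abs_of_pos hcpos, mul_pow] at hk ⊢
  calc _ = c ^ k * (c ^ n)⁻¹ * (c ^ n * |w| ^ n *
        ‖iteratedDeriv k (FourierTransform.fourier f) (c * w)‖) := by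
        field_simp
    _ ≤ _ := by gcongr

theorem decay_integrable (h : ℝ → ℂ) (hc : Continuous h) (M : ℕ) (hM : 0 < M) (B : ℝ)
    (hB : ∀ x : ℝ, (1 + |x| + x ^ 2) * (1 + |x|) ^ (M + 1) * ‖h x‖ ≤ B) (k : ℕ) (hk : k ≤ 2) :
    Integrable (fun x : ℝ => ‖x‖ ^ k * ‖h x‖) := by
  have h1 : Integrable (fun x : ℝ => (1 + ‖x‖) ^ (-(2 : ℝ))) :=
    integrable_one_add_norm (by simp)
  refine (h1.const_mul B).mono' (by fun_prop) (Eventually.of_forall fun x => ?_)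
  rw [Real.norm_eq_abs, abs_of_nonneg (by positivity), Real.norm_eq_abs,
    Real.rpow_neg (by positivity), ← div_eq_mul_inv, le_div_iff₀ (by positivity)]
  have e : (1 + |x|) ^ (2 : ℝ) = (1 + |x|) ^ 2 := by norm_cast
  rw [e]
  refine le_trans ?_ (hB x)
  have hx : |x| ^ k ≤ 1 + |x| + x ^ 2 := by
    have := abs_nonneg x
    interval_cases k <;> simp <;> nlinarith [sq_nonneg x]
  have hx2 : (1 + |x|) ^ 2 ≤ (1 + |x|) ^ (M + 1) :=
    pow_le_pow_right₀ (by linarith [abs_nonneg x]) (by omega)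
  calc _ = |x| ^ k * (1 + |x|) ^ 2 * ‖h x‖ := by ring
    _ ≤ _ := by gcongr

theorem core (F H : ℝ → ℂ) (q : ℕ) (a : ℝ) (ha : 1 ≤ a)
    (hF : ContDiff ℝ 2 F) (hH : ∀ ω : ℝ, H ω = Complex.I * ω * F (a⁻¹ * ω)) (ω : ℝ) :
    (1 + |ω| ^ (q : ℝ)) * (‖H ω‖ + ‖deriv H ω‖ + ‖deriv (deriv H) ω‖) ≤
      2 * a ^ (q + 1) * ((1 + |a⁻¹ * ω| ^ (q : ℝ)) * (1 + |a⁻¹ * ω|) *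
        (‖F (a⁻¹ * ω)‖ + ‖deriv F (a⁻¹ * ω)‖ + ‖deriv (deriv F) (a⁻¹ * ω)‖)) := by
  have ha0 : 0 < a := by linarith
  have hd1 : ∀ y, HasDerivAt F (deriv F y) y := fun y =>
    (hF.differentiable (by norm_num) y).hasDerivAt
  have hF' : ContDiff ℝ 1 (deriv F) := by
    have : ContDiff ℝ (1 + 1) F := by simpa [one_add_one_eq_two] using hF
    exact (contDiff_succ_iff_deriv.1 this).2.2
  have hd2 : ∀ y, HasDerivAt (deriv F) (deriv (deriv F) y) y := fun y =>
    (hF'.differentiable (by norm_num) y).hasDerivAt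
  have hlin : ∀ y : ℝ, HasDerivAt (fun y : ℝ => a⁻¹ * y) a⁻¹ y := fun y => by
    simpa using (hasDerivAt_id y).const_mul a⁻¹
  have hI : ∀ y : ℝ, HasDerivAt (fun y : ℝ => Complex.I * (y : ℂ)) Complex.I y := fun y => by
    simpa using ((hasDerivAt_id y).ofReal_comp).const_mul Complex.I
  have e1 : deriv H = fun y => Complex.I * F (a⁻¹ * y) +
      Complex.I * y * (a⁻¹ • deriv F (a⁻¹ * y)) := by
    funext y
    rw [funext hH]
    exact ((hI y).mul ((hd1 _).scomp y (hlin y))).deriv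
  have e2 : deriv (deriv H) ω = Complex.I * (a⁻¹ • deriv F (a⁻¹ * ω)) +
      (Complex.I * (a⁻¹ • deriv F (a⁻¹ * ω)) +
        Complex.I * ω * (a⁻¹ • (a⁻¹ • deriv (deriv F) (a⁻¹ * ω)))) := by
    rw [e1]
    exact ((((hd1 _).scomp ω (hlin ω)).const_mul Complex.I).add
      ((hI ω).mul (((hd2 _).scomp ω (hlin ω)).const_smul a⁻¹))).deriv
  obtain ⟨k, rfl⟩ : ∃ k, ω = a * k := ⟨a⁻¹ * ω, by field_simp⟩
  have hk : a⁻¹ * (a * k) = k := by field_simp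
  have n2 : ‖deriv (deriv H) (a * k)‖ ≤ 2 * ‖deriv F k‖ + |k| * ‖deriv (deriv F) k‖ := by
    rw [e2, hk]
    have hi : a⁻¹ ≤ 1 := inv_le_one_of_one_le₀ ha
    have hn := norm_nonneg (deriv F k)
    have t : a⁻¹ * ‖deriv F k‖ ≤ ‖deriv F k‖ := mul_le_of_le_one_left hn hi
    have s : a⁻¹ * (|k| * ‖deriv (deriv F) k‖) ≤ |k| * ‖deriv (deriv F) k‖ :=
      mul_le_of_le_one_left (by positivity) hi
    refine (norm_add_le _ _).trans ((add_le_add_right (norm_add_le _ _) _).trans ?_)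
    simp only [norm_mul, norm_smul, Complex.norm_I, Complex.norm_real, Real.norm_eq_abs,
      abs_mul, abs_inv, abs_of_pos ha0, one_mul]
    have : a * |k| * (a⁻¹ * (a⁻¹ * ‖deriv (deriv F) k‖)) =
      a⁻¹ * (|k| * ‖deriv (deriv F) k‖) := by field_simp
    linarith
  have n1 : ‖deriv H (a * k)‖ ≤ ‖F k‖ + |k| * ‖deriv F k‖ := by
    rw [e1]
    simp only [hk]
    refine (norm_add_le _ _).trans ?_
    simp only [norm_mul, norm_smul, Complex.norm_I, Complex.norm_real, Real.norm_eq_abs,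
      abs_mul, abs_inv, abs_of_pos ha0, one_mul]
    have : a * |k| * (a⁻¹ * ‖deriv F k‖) = |k| * ‖deriv F k‖ := by field_simp
    linarith
  have n0 : ‖H (a * k)‖ = a * |k| * ‖F k‖ := by
    rw [hH, hk]
    simp [abs_of_pos ha0]
  rw [hk, Real.rpow_natCast, Real.rpow_natCast, abs_mul, abs_of_pos ha0, mul_pow]
  have hq1 : 1 + a ^ q * |k| ^ q ≤ a ^ q * (1 + |k| ^ q) := by
    have := one_le_pow₀ ha (n := q)
    linarith
  have hsum : ‖H (a * k)‖ + ‖deriv H (a * k)‖ + ‖deriv (deriv H) (a * k)‖ ≤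
      2 * a * ((1 + |k|) * (‖F k‖ + ‖deriv F k‖ + ‖deriv (deriv F) k‖)) := by
    rw [n0]
    have A := norm_nonneg (F k)
    have B := norm_nonneg (deriv F k)
    have C := norm_nonneg (deriv (deriv F) k)
    have K := abs_nonneg k
    have c1 : (a * |k| + 1) * ‖F k‖ ≤ (2 * a * (1 + |k|)) * ‖F k‖ := by
      gcongr
      nlinarith
    have c2 : (|k| + 2) * ‖deriv F k‖ ≤ (2 * a * (1 + |k|)) * ‖deriv F k‖ := by
      gcongr
      nlinarith
    have c3 : (|k|) * ‖deriv (deriv F) k‖ ≤ (2 * a * (1 + |k|)) * ‖deriv (deriv F) k‖ := by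
      gcongr
      nlinarith
    linarith
  calc _ ≤ (a ^ q * (1 + |k| ^ q)) *
        (2 * a * ((1 + |k|) * (‖F k‖ + ‖deriv F k‖ + ‖deriv (deriv F) k‖))) := by gcongr
    _ = _ := by ring

/-- Lemma 2.5: `G_p ∈ B_q` with the explicit bound `C_{d,p,q}`. -/
theorem Gp_in_Bq
    (G : ℝ → ℝ → ℝ) (q : ℕ) (d p : ℝ) (hq : 1 < q) (hd : 0 < d) (hp : 0 < p)
    (hG : CondsG G q d) :
    MemBqR q (Gp G p) ∧
      bqNormR q (Gp G p) ≤
        2 * (p + 1) ^ (((q : ℝ) + 1) / d) *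
          ⨆ k : ℝ, (1 + |k| ^ (q : ℝ)) * (1 + |k|) *
            (‖FTr (fun x => G x 1) k‖ + ‖deriv (FTr fun x => G x 1) k‖ +
              ‖deriv (deriv (FTr fun x => G x 1)) k‖) := by
  obtain ⟨⟨M, hM, hcd, hdec⟩, hsc, -⟩ := hG
  set g : ℝ → ℝ := fun x => G x 1 with hg
  set f : ℝ → ℂ := fun x => (g x : ℂ) with hf
  set a : ℝ := (p + 1) ^ (1 / d) with ha_def
  have ha1 : 1 ≤ a := Real.one_le_rpow (by linarith) (by positivity)
  have ha0 : 0 < a := by linarith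
  have hapow : (p + 1) ^ (((q : ℝ) + 1) / d) = a ^ (q + 1) := by
    rw [ha_def, ← Real.rpow_natCast, ← Real.rpow_mul (by linarith)]
    congr 1
    push_cast
    ring
  have ha_t : (1 / (p + 1)) ^ (-(1 : ℝ) / d) = a := by
    rw [one_div, Real.inv_rpow (by linarith), ← Real.rpow_neg (by linarith), ha_def]
    congr 1
    ring
  have hfcd : ContDiff ℝ (q + 2 : ℕ) f := Complex.ofRealCLM.contDiff.comp hcd
  have hnorm : ∀ n ≤ q + 2, ∀ x, ‖iteratedDeriv n f x‖ = |iteratedDeriv n g x| := by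
    intro n hn x
    rw [← norm_iteratedFDeriv_eq_norm_iteratedDeriv, ← Real.norm_eq_abs,
      ← norm_iteratedFDeriv_eq_norm_iteratedDeriv]
    exact Complex.ofRealLI.norm_iteratedFDeriv_comp_left (hcd.contDiffAt) (by exact_mod_cast hn)
  have hint : ∀ k n : ℕ, k ≤ 2 → n ≤ q + 2 →
      Integrable (fun v : ℝ => ‖v‖ ^ k * ‖iteratedFDeriv ℝ n f v‖) := by
    intro k n hk hn
    obtain ⟨B, hB⟩ := hdec n hn
    simp only [norm_iteratedFDeriv_eq_norm_iteratedDeriv]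
    refine decay_integrable _ (hfcd.continuous_iteratedDeriv n (by exact_mod_cast hn)) M hM B
      (fun x => ?_) k hk
    rw [hnorm n hn]
    exact hB x
  have hintf : ∀ n ≤ q + 2, Integrable (iteratedDeriv n f) := by
    intro n hn
    rw [← integrable_norm_iff
      (hfcd.continuous_iteratedDeriv n (by exact_mod_cast hn)).aestronglyMeasurable]
    simpa [norm_iteratedFDeriv_eq_norm_iteratedDeriv] using hint 0 n (by norm_num) hn
  have hfi : Integrable f := by simpa using hintf 0 (by omega)
  have hfi' : Integrable (deriv f) := by simpa using hintf 1 (by omega)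
  have hfdiff : Differentiable ℝ f := hfcd.differentiable (by simp)
  have hF : ContDiff ℝ 2 (FT f) := FT_contDiff f fun n hn => by
    simpa using hint n 0 hn (by omega)
  -- the function `G_p`
  have hGp : (fun x => ((Gp G p x : ℝ) : ℂ)) = fun x => (a : ℂ) ^ 2 * deriv f (a * x) := by
    funext x
    have e : (fun y => G y (1 / (p + 1))) = fun y => a * g (a * y) := by
      funext y
      rw [hsc y _ (by positivity), ha_t]
    have hgd : HasDerivAt g (deriv g (a * x)) (a * x) :=
      (hcd.differentiable (by simp) _).hasDerivAt
    have hl : HasDerivAt (fun y : ℝ => a * y) a x := by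
      simpa using (hasDerivAt_id x).const_mul a
    have h1 : deriv (fun y => a * g (a * y)) x = a * (deriv g (a * x) * a) :=
      ((hgd.comp x hl).const_mul a).deriv
    have h2 : deriv f (a * x) = ((deriv g (a * x) : ℝ) : ℂ) := hgd.ofReal_comp.deriv
    unfold Gp
    rw [e, h1, h2]
    push_cast
    ring
  have hGpi : Integrable (fun x => ((Gp G p x : ℝ) : ℂ)) := by
    rw [hGp]
    exact (hfi'.comp_mul_left' ha0.ne').const_mul _
  have hder : ∀ ω : ℝ, FT (deriv f) ω = Complex.I * ω * FT f ω := by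
    intro ω
    rw [FT_eq_fourier, FT_eq_fourier]
    simp only
    rw [Real.fourier_deriv hfi hfdiff hfi']
    simp only [smul_eq_mul]
    have : (Real.pi : ℂ) ≠ 0 := by exact_mod_cast Real.pi_ne_zero
    push_cast
    field_simp
  have hH : ∀ ω : ℝ, FT (fun x => ((Gp G p x : ℝ) : ℂ)) ω =
      Complex.I * ω * FT f (a⁻¹ * ω) := by
    intro ω
    have hac : (a : ℂ) ≠ 0 := by exact_mod_cast ha0.ne'
    rw [hGp]
    have e : FT (fun x : ℝ => (a : ℂ) ^ 2 * deriv f (a * x)) ω =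
        ∫ x : ℝ, (fun y : ℝ => (a : ℂ) ^ 2 *
          (Complex.exp (-(Complex.I * (a⁻¹ * ω : ℝ) * y)) * deriv f y)) (a * x) := by
      unfold FT
      congr 1
      funext x
      simp only
      have : -(Complex.I * (a⁻¹ * ω : ℝ) * (a * x : ℝ)) = -(Complex.I * ω * x) := by
        push_cast
        field_simp
      rw [this]
      ring
    rw [e, Measure.integral_comp_mul_left (fun y : ℝ => (a : ℂ) ^ 2 *
          (Complex.exp (-(Complex.I * (a⁻¹ * ω : ℝ) * y)) * deriv f y)) a, integral_const_mul]
    have e2 : (∫ y : ℝ, Complex.exp (-(Complex.I * (a⁻¹ * ω : ℝ) * y)) * deriv f y) =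
      FT (deriv f) (a⁻¹ * ω) := rfl
    rw [e2, hder, abs_of_pos (by positivity), Complex.real_smul]
    push_cast
    field_simp
  have hHcd : ContDiff ℝ 2 (FT (fun x => ((Gp G p x : ℝ) : ℂ))) := by
    rw [funext hH]
    have h1 : ContDiff ℝ 2 (fun ω : ℝ => (ω : ℂ)) := Complex.ofRealCLM.contDiff
    have h2 : ContDiff ℝ 2 (fun ω : ℝ => FT f (a⁻¹ * ω)) := hF.comp (by fun_prop)
    exact (contDiff_const.mul h1).mul h2
  -- boundedness of the supremum
  have hbdd : BddAbove (Set.range fun k : ℝ => (1 + |k| ^ (q : ℝ)) * (1 + |k|) *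
            (‖FT f k‖ + ‖deriv (FT f) k‖ + ‖deriv (deriv (FT f)) k‖)) := by
    have hone : ∀ j ≤ 2, ∃ C : ℝ, ∀ w : ℝ,
        (1 + |w| ^ (q : ℝ)) * (1 + |w|) * ‖iteratedDeriv j (FT f) w‖ ≤ C := by
      intro j hj
      have D := fun n hn => FT_decay f (q + 2) hfcd hint j n hj hn
      obtain ⟨C0, h0⟩ := D 0 (by omega)
      obtain ⟨C1, h1⟩ := D 1 (by omega)
      obtain ⟨C2, h2⟩ := D q (by omega)
      obtain ⟨C3, h3⟩ := D (q + 1) (by omega)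
      refine ⟨C0 + C1 + C2 + C3, fun w => ?_⟩
      rw [Real.rpow_natCast]
      calc _ = |w| ^ 0 * ‖iteratedDeriv j (FT f) w‖ + |w| ^ 1 * ‖iteratedDeriv j (FT f) w‖ +
          |w| ^ q * ‖iteratedDeriv j (FT f) w‖ +
          |w| ^ (q + 1) * ‖iteratedDeriv j (FT f) w‖ := by ring
        _ ≤ _ := add_le_add (add_le_add (add_le_add (h0 w) (h1 w)) (h2 w)) (h3 w)
    obtain ⟨C0, h0⟩ := hone 0 (by norm_num)
    obtain ⟨C1, h1⟩ := hone 1 (by norm_num)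
    obtain ⟨C2, h2⟩ := hone 2 (by norm_num)
    refine ⟨C0 + C1 + C2, ?_⟩
    rintro _ ⟨w, rfl⟩
    have h0 := h0 w
    have h1 := h1 w
    have h2 := h2 w
    rw [iteratedDeriv_zero] at h0
    rw [iteratedDeriv_one] at h1
    rw [iteratedDeriv_succ, iteratedDeriv_one] at h2
    simp only [mul_add] at h0 h1 h2 ⊢
    linarith
  have hpt : ∀ ω, bqFun q (fun x => ((Gp G p x : ℝ) : ℂ)) ω ≤
      2 * a ^ (q + 1) * ⨆ k : ℝ, (1 + |k| ^ (q : ℝ)) * (1 + |k|) *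
            (‖FT f k‖ + ‖deriv (FT f) k‖ + ‖deriv (deriv (FT f)) k‖) := by
    intro ω
    refine (core (FT f) _ q a ha1 hF hH ω).trans ?_
    gcongr
    exact le_ciSup hbdd (a⁻¹ * ω)
  have hb2 : BddAbove (Set.range (bqFun q (fun x => ((Gp G p x : ℝ) : ℂ)))) := by
    exact ⟨_, Set.forall_mem_range.2 hpt⟩
  refine ⟨⟨hGpi, hHcd, hb2⟩, ?_⟩
  rw [hapow]
  exact ciSup_le hpt
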